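/- For all sufficiently large n and all vertices x, y of G_n with d_{G_n}(x,y) ≤ (c_0/3)·log_{d−1}(N_n), the zero-average Green function satisfies G_{G_n}(x,y) ≤ 3·((d−1)/(d−2))·(1/(d−1))^{d_{G_n}(x,y)}, where d_{G_n} is the graph distance on G_n. -/

import Mathlib

open MeasureTheory ProbabilityTheory Filter Set
open scoped ENNReal NNReal ENat Classical

namespace GFF

variable {V : Type*} {T : Type*}

/-- Number of ordered adjacent pairs inside `U` (twice the number of edges of the induced
subgraph). -/
noncomputable def adjPairs (G : SimpleGraph V) (U : Set V) : ℕ :=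
  Set.ncard {p : V × V | p.1 ∈ U ∧ p.2 ∈ U ∧ G.Adj p.1 p.2}

/-- `U` (assumed connected) induces a tree, i.e. has tree excess zero. -/
def TxZero (G : SimpleGraph V) (U : Set V) : Prop :=
  adjPairs G U = 2 * (Set.ncard U - 1)

/-- Closed ball of radius `R` for the graph distance. -/
def gball (G : SimpleGraph V) (x : V) (R : ℕ) : Set V := {y | G.dist x y ≤ R}

/-- Set of vertices within distance `R` of the set `A`. -/
def sball (G : SimpleGraph V) (A : Set V) (R : ℕ) : Set V := {y | ∃ a ∈ A, G.dist a y ≤ R}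

/-- Connected component containing `x` of the level set `{ω ≥ h}`. -/
def levelComp (G : SimpleGraph V) (h : ℝ) (ω : V → ℝ) (x : V) : Set V :=
  {y | ∃ p : G.Walk x y, ∀ v ∈ p.support, h ≤ ω v}

/-- `G` is `d`-regular. -/
def IsReg (G : SimpleGraph V) (d : ℕ) : Prop := ∀ v, Nat.card (G.neighborSet v) = d

/-- `G` is an infinite `d`-regular tree. -/
def IsRegTree (G : SimpleGraph V) (d : ℕ) : Prop :=
  G.Connected ∧ G.IsAcyclic ∧ IsReg G d

/-- Transition matrix of SRW on a `d`-regular graph. -/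
noncomputable def transP [Fintype V] (G : SimpleGraph V) (d : ℕ) : Matrix V V ℝ :=
  Matrix.of fun u v => if G.Adj u v then ((d : ℝ))⁻¹ else 0

/-- All non-zero eigenvalues of `I - P` are at least `β`. -/
def SpectralGapLB [Fintype V] (G : SimpleGraph V) (d : ℕ) (β : ℝ) : Prop :=
  ∀ (f : V → ℝ) (lam : ℝ),
    Matrix.mulVec ((1 : Matrix V V ℝ) - transP G d) f = lam • f → f ≠ 0 → lam = 0 ∨ β ≤ lam

/-- `P_x[X̄_t = y]` for the continuous-time SRW with i.i.d. mean-one exponential holding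
times (Poissonized jump chain). -/
noncomputable def heatK [Fintype V] (G : SimpleGraph V) (d : ℕ) (t : ℝ) (x y : V) : ℝ :=
  ∑' k : ℕ, Real.exp (-t) * t ^ k / (Nat.factorial k) * ((transP G d) ^ k) x y

/-- The zero-average Green function. -/
noncomputable def zGreen [Fintype V] (G : SimpleGraph V) (d Nn : ℕ) (x y : V) : ℝ :=
  ∫ t in Set.Ioi (0 : ℝ), (heatK G d t x y - 1 / (Nn : ℝ))

/-- Green function of SRW on the `d`-regular tree. -/
noncomputable def treeGreen (G : SimpleGraph V) (d : ℕ) (x y : V) : ℝ :=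
  (((d : ℝ) - 1) / ((d : ℝ) - 2)) * (((d : ℝ) - 1)⁻¹) ^ (G.dist x y)

/-- `μ` is the law of the centred Gaussian field with covariance `K`. -/
def IsGaussianField {I : Type*} (μ : Measure (I → ℝ)) (K : I → I → ℝ) : Prop :=
  IsProbabilityMeasure μ ∧
    ∀ c : I →₀ ℝ,
      μ.map (fun ω => ∑ i ∈ c.support, c i * ω i) =
        gaussianReal 0 (Real.toNNReal (∑ i ∈ c.support, ∑ j ∈ c.support, c i * c j * K i j))

/-- One-step transition probability of SRW. -/
noncomputable def srwStep (G : SimpleGraph V) (d : ℕ) (u v : V) : ℝ≥0∞ :=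
  if G.Adj u v then (d : ℝ≥0∞)⁻¹ else 0

/-- `W x` is the law of discrete-time SRW on `G` started at `x`. -/
def IsSRW [MeasurableSpace V] (G : SimpleGraph V) (d : ℕ) (W : V → Measure (ℕ → V)) : Prop :=
  (∀ x, IsProbabilityMeasure (W x)) ∧
    ∀ (x : V) (k : ℕ) (p : ℕ → V),
      W x {ω | ∀ i ≤ k, ω i = p i} =
        (if p 0 = x then 1 else 0) * ∏ i ∈ Finset.range k, srwStep G d (p i) (p (i + 1))

/-- Entrance time of the set `A` (`⊤` if never entered). -/
noncomputable def hitTime (A : Set V) (ω : ℕ → V) : ℕ∞ :=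
  sInf ((Nat.cast : ℕ → ℕ∞) '' {k | ω k ∈ A})

/-- Exit time of the set `U`. -/
noncomputable def exitTime (U : Set V) (ω : ℕ → V) : ℕ∞ := hitTime Uᶜ ω

/-- Position of the walk at the entrance time of `A`. -/
noncomputable def stopAt (A : Set V) (ω : ℕ → V) : V := ω (hitTime A ω).toNat

/-- `π` is a cover tree of `G` at `x`. -/
def IsCoverMap (Gt : SimpleGraph T) (G : SimpleGraph V) (o : T) (x : V) (π : T → V) : Prop :=
  π o = x ∧ Function.Surjective π ∧ ∀ y : T, π '' (Gt.neighborSet y) = G.neighborSet (π y)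

/-- `T_d^+`: the vertices of the tree whose geodesic to `o` avoids the fixed neighbour
`obar` of `o`. -/
def treePlus (Gt : SimpleGraph T) (o obar : T) : Set T :=
  {z | Gt.dist z obar = Gt.dist z o + 1}

/-- `S^+_{T_d}(o,R)`. -/
def spherePlus (Gt : SimpleGraph T) (o obar : T) (R : ℕ) : Set T :=
  {z | z ∈ treePlus Gt o obar ∧ Gt.dist o z = R}

/-- The critical value for level-set percolation on the tree (w.r.t. the law `μT`). -/
noncomputable def hstar (Gt : SimpleGraph T) (o : T) (μT : Measure (T → ℝ)) : ℝ :=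
  sInf {h : ℝ | μT {ω | (levelComp Gt h ω o).Infinite} = 0}

/-- The forward percolation probability `η⁺(h)`. -/
noncomputable def etaPlus (Gt : SimpleGraph T) (o obar : T) (μT : Measure (T → ℝ)) (h : ℝ) :
    ℝ :=
  (μT {ω | (levelComp Gt h ω o ∩ treePlus Gt o obar).Infinite}).toReal

/-- `s_n`. -/
noncomputable def sn (d Nn : ℕ) : ℕ :=
  max 1 ⌊(8 : ℝ) * Real.logb ((d : ℝ) - 1) (Real.logb ((d : ℝ) - 1) (Nn : ℝ))⌋₊

/-- `c₀ = αβ/(d-1)`. -/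
noncomputable def c0 (d : ℕ) (α β : ℝ) : ℝ := α * β / ((d : ℝ) - 1)

/-- `r_n`. -/
noncomputable def rn (d : ℕ) (α β : ℝ) (Nn : ℕ) : ℕ :=
  max 1 ⌊(c0 d α β / 18) * Real.logb ((d : ℝ) - 1) (Nn : ℝ)⌋₊

/-- `R_n`. -/
noncomputable def Rn (d : ℕ) (α β : ℝ) (Nn : ℕ) : ℕ :=
  max 1 ⌊(c0 d α β / 6) * Real.logb ((d : ℝ) - 1) (Nn : ℝ)⌋₊

/-- `F_A(x,s)`: the vertices of `B(A,s) ∖ A` connected to `x` within `B(A,s) ∖ A`. -/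
def Fset (G : SimpleGraph V) (A : Set V) (s : ℕ) (x : V) : Set V :=
  {z | ∃ p : G.Walk x z, ∀ v ∈ p.support, v ∈ sball G A s ∧ v ∉ A}

/-- Good vertex at the boundary of `A`. -/
def GoodVertex (G : SimpleGraph V) (A : Set V) (s : ℕ) (x : V) : Prop :=
  x ∉ A ∧ (∃! y, y ∈ A ∧ G.Adj x y) ∧
    TxZero G (Fset G A s x) ∧
    ∀ y : V, y ∉ A → (∃ a ∈ A, G.Adj y a) → y ≠ x →
      ∀ p : G.Walk y x, (∀ v ∈ p.support, v ∉ A) → ∃ v ∈ p.support, v ∉ sball G A s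

end GFF

/-! Split the zero-average Green function at a time `s` of order `log N`. After `s`, the spectral
gap makes the integrand at most `exp (-β t)`. Before `s`, the walk rarely makes more than
`R = ⌊α log_{d-1} N⌋` jumps, by a Chernoff bound for the Poisson clock, so only the first `R` steps
of the jump chain from `x` matter. These stay in the ball of radius `R` around `x`, and their
expected number at `y` is at most `h x` for any nonnegative `h` which is superharmonic inside that
ball with a unit source at `y`. As the ball is a tree with at most one edge added, such an `h` is
explicit: the Green function of the tree, plus the contribution of the geodesics that use the extra
edge. Geodesics around a cycle of length at least three are long enough that `h` is at most `5 / 2`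
times the Green function of the regular tree, and the two error terms add at most another half. -/

namespace GFF

section Graph

variable {V : Type*} {G H T : SimpleGraph V} {u v w x y z : V}

lemma dist_le_dist_add_one_of_adj (x : V) (h : G.Adj z w) : G.dist x w ≤ G.dist x z + 1 :=
  (h.reachable.dist_triangle_right x).trans_eq (by rw [SimpleGraph.dist_eq_one_iff_adj.2 h])

lemma existsUnique_adj_dist_eq_add_one (hT : T.IsTree) (hzw : z ≠ w) :
    ∃! a, T.Adj z a ∧ T.dist w z = T.dist w a + 1 := by
  obtain ⟨p, hp, hpl⟩ := hT.connected.exists_path_of_dist z w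
  have hnil : ¬ p.Nil := SimpleGraph.Walk.not_nil_of_ne hzw
  have hsnd : T.dist w z = T.dist w p.snd + 1 := by
    have htail := T.dist_le p.tail
    have hadj := hT.dist_eq_dist_add_one_of_adj w (p.adj_snd hnil)
    have hlen := SimpleGraph.Walk.length_tail_add_one hnil
    rw [T.dist_comm (v := w)] at htail hpl
    omega
  refine ⟨p.snd, ⟨p.adj_snd hnil, hsnd⟩, fun a ⟨ha, hda⟩ => ?_⟩
  obtain ⟨p', -, hpl'⟩ := hT.connected.exists_path_of_dist a w
  have hcons : (SimpleGraph.Walk.cons ha p').IsPath :=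
    SimpleGraph.Walk.isPath_of_length_eq_dist _ <| by
      rw [SimpleGraph.Walk.length_cons, hpl', T.dist_comm (u := z), hda, T.dist_comm]
  rw [← (hT.existsUnique_path z w).unique hcons hp, SimpleGraph.Walk.snd_cons]

lemma connected_induce_gball (hG : G.Connected) (x : V) (R : ℕ) :
    (G.induce (gball G x R)).Connected := by
  refine G.induce_connected_of_patches x (by simp [gball]) fun {z} hz => ?_
  obtain ⟨p, hp⟩ := hG.exists_walk_length_eq_dist x z
  refine ⟨{v | v ∈ p.support}, fun v hv => ?_, p.start_mem_support, p.end_mem_support,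
    p.connected_induce_support _ _⟩
  calc G.dist x v ≤ (p.takeUntil v hv).length := G.dist_le _
    _ ≤ p.length := p.length_takeUntil_le_length hv
    _ ≤ R := hp.trans_le hz

lemma dist_le_dist_induce {U : Set V} (hU : (G.induce U).Connected) (x y : U) :
    G.dist x y ≤ (G.induce U).dist x y := by
  obtain ⟨p, hp⟩ := hU.exists_walk_length_eq_dist x y
  rw [← hp, ← p.length_map (SimpleGraph.Embedding.induce U).toHom]
  exact G.dist_le _

lemma adjPairs_eq_two_mul_card_edgeFinset_induce (G : SimpleGraph V) (U : Set V) [Fintype U] :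
    adjPairs G U = 2 * (G.induce U).edgeFinset.card := by
  rw [← SimpleGraph.dart_card_eq_twice_card_edges, ← Nat.card_eq_fintype_card, adjPairs,
    ← Nat.card_coe_set_eq]
  exact Nat.card_congr
    { toFun p := ⟨(⟨p.1.1, p.2.1⟩, ⟨p.1.2, p.2.2.1⟩), p.2.2.2⟩
      invFun e := ⟨(e.fst, e.snd), e.fst.2, e.snd.2, e.adj⟩
      left_inv _ := rfl
      right_inv _ := rfl }

lemma dist_le_dist_add_dist_add_one_of_le (hle : T ≤ G) (hT : T.Connected) (huv : G.Adj u v)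
    (x y : V) : G.dist x y ≤ T.dist x u + T.dist v y + 1 := by
  have hxu := (hT x u).dist_anti hle
  have hvy := (hT v y).dist_anti hle
  have hyu := dist_le_dist_add_one_of_adj y huv.symm
  have htri := (hT.mono hle).dist_triangle (u := x) (v := u) (w := y)
  rw [G.dist_comm, G.dist_comm (v := v)] at hyu
  omega

variable [Fintype V]

lemma neighborFinset_eq_insert_of_eq_sup_edge (hH : H = G ⊔ SimpleGraph.edge u v) (huv : u ≠ v) :
    H.neighborFinset u = insert v (G.neighborFinset u) := by
  ext b
  simp only [hH, SimpleGraph.mem_neighborFinset, SimpleGraph.sup_adj, SimpleGraph.edge_adj,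
    Finset.mem_insert]
  grind

lemma neighborFinset_eq_of_eq_sup_edge (hH : H = G ⊔ SimpleGraph.edge u v) (hu : z ≠ u)
    (hv : z ≠ v) : H.neighborFinset z = G.neighborFinset z := by
  ext b
  simp [hH, SimpleGraph.edge_adj, hu, hv]

lemma exists_isTree_eq_or_eq_sup_edge (hG : G.Connected)
    (hcard : G.edgeFinset.card ≤ Fintype.card V) :
    ∃ T : SimpleGraph V, T.IsTree ∧
      (G = T ∨ ∃ u v, u ≠ v ∧ ¬ T.Adj u v ∧ G = T ⊔ SimpleGraph.edge u v) := by
  obtain ⟨T, hle, hT⟩ := hG.exists_isTree_le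
  refine ⟨T, hT, or_iff_not_imp_left.2 fun hne => ?_⟩
  obtain ⟨u, v, huv, hTuv⟩ : ∃ u v, G.Adj u v ∧ ¬ T.Adj u v := by
    by_contra! h
    exact hne (le_antisymm h hle)
  have hdiff : (G.edgeFinset \ T.edgeFinset).card ≤ 1 := by
    rw [Finset.card_sdiff_of_subset (SimpleGraph.edgeFinset_mono hle)]
    have := hT.card_edgeFinset
    omega
  refine ⟨u, v, huv.ne, hTuv, le_antisymm (fun a b hab => ?_)
    (sup_le hle ((SimpleGraph.edge_le_iff _).2 (.inr huv)))⟩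
  refine or_iff_not_imp_left.2 fun hTab => (SimpleGraph.adj_edge _ _).2 ⟨?_, hab.ne⟩
  exact Finset.card_le_one.1 hdiff _ (by simp [huv, hTuv]) _ (by simp [hab, hTab])

end Graph

section Supersolution

variable {W : Type*} {H T : SimpleGraph W} {d : ℕ} {u v : W}

lemma inv_pow_dist_le_treeGreen (hd : 3 ≤ d) (x y : W) :
    ((d : ℝ) - 1)⁻¹ ^ T.dist x y ≤ treeGreen T d x y := by
  have hd' : (3 : ℝ) ≤ d := by exact_mod_cast hd
  have hq : 0 ≤ (d : ℝ) - 1 := by linarith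
  exact le_mul_of_one_le_left (by positivity) ((one_le_div (by linarith)).2 (by linarith))

lemma treeGreen_nonneg (hd : 3 ≤ d) (x y : W) : 0 ≤ treeGreen T d x y := by
  have hd' : (3 : ℝ) ≤ d := by exact_mod_cast hd
  exact (pow_nonneg (inv_nonneg.2 (by linarith)) _).trans (inv_pow_dist_le_treeGreen hd x y)

/-- Green function with pole `y` of the graph obtained by adding the edge `uv` to the tree `T`. It
is the sum of tree Green functions over the lifts of `y` to the universal cover: the geodesic to a
lift stays in `T`, or crosses the new edge first from `v` to `u` or first from `u` to `v`, and then
winds `k` more times around the cycle, at a cost of one factor `(d - 1)⁻¹ ^ (T.dist u v + 1)` per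
turn; the sum over `k` is the geometric series that gives the denominators. -/
noncomputable def unicyclicGreen (T : SimpleGraph W) (d : ℕ) (u v y z : W) : ℝ :=
  treeGreen T d y z +
    ((d : ℝ) - 1)⁻¹ ^ T.dist y v / (d - 1 - ((d : ℝ) - 1)⁻¹ ^ T.dist u v) * treeGreen T d u z +
    ((d : ℝ) - 1)⁻¹ ^ T.dist y u / (d - 1 - ((d : ℝ) - 1)⁻¹ ^ T.dist u v) * treeGreen T d v z

lemma unicyclicGreen_swap (T : SimpleGraph W) (d : ℕ) (u v y z : W) :
    unicyclicGreen T d u v y z = unicyclicGreen T d v u y z := by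
  simp only [unicyclicGreen, T.dist_comm (u := u) (v := v)]
  ring

lemma inv_pow_lt_pred (hd : 3 ≤ d) (n : ℕ) : ((d : ℝ) - 1)⁻¹ ^ n < d - 1 := by
  have hd' : (3 : ℝ) ≤ d := by exact_mod_cast hd
  exact (pow_le_one₀ (inv_nonneg.2 (by linarith)) (inv_le_one_of_one_le₀ (by linarith))).trans_lt
    (by linarith)

lemma unicyclicGreen_nonneg (hd : 3 ≤ d) (u v y z : W) : 0 ≤ unicyclicGreen T d u v y z := by
  have hq : (0 : ℝ) ≤ d - 1 := by
    have : (3 : ℝ) ≤ d := by exact_mod_cast hd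
    linarith
  have hden := (sub_pos.2 (inv_pow_lt_pred hd (T.dist u v))).le
  have hpow (n : ℕ) : 0 ≤ ((d : ℝ) - 1)⁻¹ ^ n := pow_nonneg (inv_nonneg.2 hq) n
  have htree (w : W) : 0 ≤ treeGreen T d w z := treeGreen_nonneg hd w z
  exact add_nonneg (add_nonneg (htree y) (mul_nonneg (div_nonneg (hpow _) hden) (htree u)))
    (mul_nonneg (div_nonneg (hpow _) hden) (htree v))

lemma unicyclicGreen_apply_right (hd : 3 ≤ d) (T : SimpleGraph W) (u v y : W) :
    unicyclicGreen T d u v y v = unicyclicGreen T d u v y u / (d - 1) +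
      d * (((d : ℝ) - 1)⁻¹ ^ T.dist y v / (d - 1 - ((d : ℝ) - 1)⁻¹ ^ T.dist u v)) := by
  have hd' : (3 : ℝ) ≤ d := by exact_mod_cast hd
  have hq : (d : ℝ) - 1 ≠ 0 := by linarith
  have hq' : (d : ℝ) - 2 ≠ 0 := by linarith
  have hden := (sub_pos.2 (inv_pow_lt_pred hd (T.dist u v))).ne'
  simp only [unicyclicGreen, treeGreen, SimpleGraph.dist_self, pow_zero,
    T.dist_comm (u := v) (v := u)]
  generalize ((d : ℝ) - 1)⁻¹ ^ T.dist u v = ε at *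
  generalize ((d : ℝ) - 1)⁻¹ ^ T.dist y v = pv
  generalize ((d : ℝ) - 1)⁻¹ ^ T.dist y u = pu
  field_simp
  ring

lemma pow_add_pow_le_one_add_pow {r : ℝ} (hr₀ : 0 ≤ r) (hr₁ : r ≤ 1) (a b : ℕ) :
    r ^ a + r ^ b ≤ 1 + r ^ (a + b) := by
  have := mul_nonneg (sub_nonneg.2 (pow_le_one₀ hr₀ hr₁ (n := a)))
    (sub_nonneg.2 (pow_le_one₀ hr₀ hr₁ (n := b)))
  rw [pow_add]
  linarith

lemma pow_add_pow_le_five_fourths_mul {r : ℝ} (hr₀ : 0 ≤ r) (hr₁ : r ≤ 1 / 2) {D a b : ℕ}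
    (ha : D ≤ a) (hb : D ≤ b) (hab : 2 * D + 2 ≤ a + b) : r ^ a + r ^ b ≤ 5 / 4 * r ^ D := by
  obtain ⟨i, rfl⟩ := Nat.exists_eq_add_of_le ha
  obtain ⟨j, rfl⟩ := Nat.exists_eq_add_of_le hb
  have hij : r ^ (i + j) ≤ 1 / 4 :=
    (pow_le_pow_of_le_one hr₀ (by linarith) (by omega : 2 ≤ i + j)).trans (by nlinarith)
  calc r ^ (D + i) + r ^ (D + j) = r ^ D * (r ^ i + r ^ j) := by ring
    _ ≤ r ^ D * (5 / 4) := by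
      gcongr
      linarith [pow_add_pow_le_one_add_pow hr₀ (by linarith) i j]
    _ = 5 / 4 * r ^ D := mul_comm _ _

lemma unicyclicGreen_eq (hd : 3 ≤ d) (T : SimpleGraph W) (u v y x : W) :
    unicyclicGreen T d u v y x = treeGreen T d y x +
      ((d : ℝ) - 1) / (d - 2) * ((((d : ℝ) - 1)⁻¹ ^ (T.dist y v + T.dist u x + 1) +
        ((d : ℝ) - 1)⁻¹ ^ (T.dist y u + T.dist v x + 1)) /
          (1 - ((d : ℝ) - 1)⁻¹ ^ (T.dist u v + 1))) := by
  have hd' : (3 : ℝ) ≤ d := by exact_mod_cast hd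
  have hq : (d : ℝ) - 1 ≠ 0 := by linarith
  have hden : ((d : ℝ) - 1 - ((d : ℝ) - 1)⁻¹ ^ T.dist u v) =
      (d - 1) * (1 - ((d : ℝ) - 1)⁻¹ ^ (T.dist u v + 1)) := by
    rw [pow_succ]
    field_simp
  rw [unicyclicGreen, hden]
  simp only [treeGreen, pow_succ _ (_ + _), pow_add, div_eq_mul_inv, mul_inv]
  ring

lemma pow_dist_add_pow_dist_div_le (hd : 3 ≤ d) (hT : T.Connected)
    (hH : H = T ⊔ SimpleGraph.edge u v) (huv : u ≠ v) (hadj : ¬ T.Adj u v) (y x : W) :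
    (((d : ℝ) - 1)⁻¹ ^ (T.dist y v + T.dist u x + 1) +
        ((d : ℝ) - 1)⁻¹ ^ (T.dist y u + T.dist v x + 1)) /
      (1 - ((d : ℝ) - 1)⁻¹ ^ (T.dist u v + 1)) ≤ 3 / 2 * ((d : ℝ) - 1)⁻¹ ^ H.dist y x := by
  have hd' : (3 : ℝ) ≤ d := by exact_mod_cast hd
  have hle : T ≤ H := hH ▸ le_sup_left
  have hHuv : H.Adj u v := by simp [hH, SimpleGraph.edge_adj, huv]
  have hyx := (hT y x).dist_anti hle
  have hyux := hT.dist_triangle (u := y) (v := u) (w := x)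
  have hyvx := hT.dist_triangle (u := y) (v := v) (w := x)
  have hr₀ : (0 : ℝ) ≤ ((d : ℝ) - 1)⁻¹ := inv_nonneg.2 (by linarith)
  have hr₁ : ((d : ℝ) - 1)⁻¹ ≤ 1 / 2 := inv_le_of_inv_le₀ (by norm_num) (by linarith)
  have hcross := pow_add_pow_le_five_fourths_mul hr₀ hr₁
    (dist_le_dist_add_dist_add_one_of_le hle hT hHuv.symm y x)
    (dist_le_dist_add_dist_add_one_of_le hle hT hHuv y x) (by omega)
  have hturn : ((d : ℝ) - 1)⁻¹ ^ (T.dist u v + 1) ≤ 1 / 8 := by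
    have := (hT u v).one_lt_dist_of_ne_of_not_adj huv hadj
    calc ((d : ℝ) - 1)⁻¹ ^ (T.dist u v + 1) ≤ ((d : ℝ) - 1)⁻¹ ^ 3 :=
          pow_le_pow_of_le_one hr₀ (by linarith) (by omega)
      _ ≤ (1 / 2) ^ 3 := by gcongr
      _ = 1 / 8 := by norm_num
  rw [div_le_iff₀ (by linarith)]
  nlinarith [pow_nonneg hr₀ (H.dist y x)]

lemma unicyclicGreen_le (hd : 3 ≤ d) (hT : T.Connected) (hH : H = T ⊔ SimpleGraph.edge u v)
    (huv : u ≠ v) (hadj : ¬ T.Adj u v) (y x : W) :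
    unicyclicGreen T d u v y x ≤ 5 / 2 * treeGreen H d y x := by
  have hd' : (3 : ℝ) ≤ d := by exact_mod_cast hd
  have hc : (0 : ℝ) ≤ ((d : ℝ) - 1) / (d - 2) := div_nonneg (by linarith) (by linarith)
  have hyx : ((d : ℝ) - 1)⁻¹ ^ T.dist y x ≤ ((d : ℝ) - 1)⁻¹ ^ H.dist y x :=
    pow_le_pow_of_le_one (inv_nonneg.2 (by linarith)) (inv_le_one_of_one_le₀ (by linarith))
      ((hT y x).dist_anti (hH ▸ le_sup_left))
  rw [unicyclicGreen_eq hd, treeGreen, treeGreen, ← mul_add, mul_left_comm]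
  gcongr
  linarith [pow_dist_add_pow_dist_div_le hd hT hH huv hadj y x]

variable [Fintype W]

lemma sum_neighborFinset_pow_dist {K : Type*} [Field K] {r : K} (hr : r ≠ 0) (hT : T.IsTree)
    (w z : W) :
    ∑ a ∈ T.neighborFinset z, r ^ T.dist w a =
      T.degree z * (r * r ^ T.dist w z) +
        (r⁻¹ - r) * (r ^ T.dist w z - if z = w then 1 else 0) := by
  have hfar {a : W} (ha : a ∈ T.neighborFinset z) (hda : T.dist w z ≠ T.dist w a + 1) :
      r ^ T.dist w a = r * r ^ T.dist w z := by
    have := hT.dist_eq_dist_add_one_of_adj w ((T.mem_neighborFinset z a).1 ha)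
    rw [← pow_succ', show T.dist w a = T.dist w z + 1 by omega]
  rcases eq_or_ne z w with rfl | hzw
  · rw [Finset.sum_congr rfl fun a ha => hfar ha (by simp)]
    simp
  obtain ⟨b, ⟨hb, hdb⟩, huniq⟩ := existsUnique_adj_dist_eq_add_one hT hzw
  have hmem : b ∈ T.neighborFinset z := (T.mem_neighborFinset z b).2 hb
  have hrest : ∀ a ∈ (T.neighborFinset z).erase b, r ^ T.dist w a = r * r ^ T.dist w z := by
    intro a ha
    obtain ⟨hab, ha⟩ := Finset.mem_erase.1 ha
    exact hfar ha fun hda => hab (huniq a ⟨(T.mem_neighborFinset z a).1 ha, hda⟩)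
  rw [← Finset.add_sum_erase _ _ hmem, Finset.sum_congr rfl hrest, Finset.sum_const,
    Finset.card_erase_of_mem hmem, T.card_neighborFinset_eq_degree, nsmul_eq_mul,
    Nat.cast_pred (T.degree_pos_iff_exists_adj z |>.2 ⟨b, hb⟩), hdb, if_neg hzw, pow_succ]
  field_simp
  ring

lemma sum_neighborFinset_treeGreen (hd : 3 ≤ d) (hT : T.IsTree) (w z : W) :
    ∑ a ∈ T.neighborFinset z, treeGreen T d w a =
      (d - (d - T.degree z) / (d - 1)) * treeGreen T d w z - d * if z = w then 1 else 0 := by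
  have hd' : (3 : ℝ) ≤ d := by exact_mod_cast hd
  have hq : (d : ℝ) - 1 ≠ 0 := by linarith
  have hq' : (d : ℝ) - 2 ≠ 0 := by linarith
  simp only [treeGreen, ← Finset.mul_sum, sum_neighborFinset_pow_dist (inv_ne_zero hq) hT]
  field_simp
  ring

/-- `h` is a nonnegative supersolution of the Green equation `d • h - ∑ h = d • δ_y` of the simple
random walk on a `d`-regular graph, imposed only at the vertices of `H` of full degree `d`: the
others are the boundary of `H` seen as a piece of that graph. -/
structure IsGreenSupersolution (H : SimpleGraph W) (d : ℕ) (y : W) (h : W → ℝ) : Prop where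
  nonneg : 0 ≤ h
  le : ∀ z, H.degree z = d →
    d * (if z = y then 1 else 0) + ∑ a ∈ H.neighborFinset z, h a ≤ d * h z

lemma isGreenSupersolution_treeGreen (hd : 3 ≤ d) (hT : T.IsTree) (y : W) :
    IsGreenSupersolution T d y (treeGreen T d y) where
  nonneg := treeGreen_nonneg hd y
  le z hz := by simp [sum_neighborFinset_treeGreen hd hT, hz]

lemma sum_neighborFinset_unicyclicGreen (hd : 3 ≤ d) (hT : T.IsTree) (u v y z : W) :
    ∑ a ∈ T.neighborFinset z, unicyclicGreen T d u v y a =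
      (d - (d - T.degree z) / (d - 1)) * unicyclicGreen T d u v y z -
        d * ((if z = y then 1 else 0) +
          ((d : ℝ) - 1)⁻¹ ^ T.dist y v / (d - 1 - ((d : ℝ) - 1)⁻¹ ^ T.dist u v) *
            (if z = u then 1 else 0) +
          ((d : ℝ) - 1)⁻¹ ^ T.dist y u / (d - 1 - ((d : ℝ) - 1)⁻¹ ^ T.dist u v) *
            (if z = v then 1 else 0)) := by
  simp only [unicyclicGreen, Finset.sum_add_distrib, ← Finset.mul_sum,
    sum_neighborFinset_treeGreen hd hT]
  ring

lemma sum_neighborFinset_unicyclicGreen_of_eq_sup_edge (hd : 3 ≤ d) (hT : T.IsTree)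
    (hH : H = T ⊔ SimpleGraph.edge u v) (huv : u ≠ v) (hadj : ¬ T.Adj u v) (y : W)
    (hdeg : H.degree u = d) :
    ∑ a ∈ H.neighborFinset u, unicyclicGreen T d u v y a =
      d * unicyclicGreen T d u v y u - d * if u = y then 1 else 0 := by
  have hins := neighborFinset_eq_insert_of_eq_sup_edge hH huv
  have hmem : v ∉ T.neighborFinset u := by simpa using hadj
  have hdegT : (T.degree u : ℝ) = d - 1 := by
    rw [← SimpleGraph.card_neighborFinset_eq_degree, hins, Finset.card_insert_of_notMem hmem,
      T.card_neighborFinset_eq_degree] at hdeg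
    simp [← hdeg]
  rw [hins, Finset.sum_insert hmem, sum_neighborFinset_unicyclicGreen hd hT,
    unicyclicGreen_apply_right hd, hdegT, if_pos rfl, if_neg huv]
  ring

lemma isGreenSupersolution_unicyclicGreen (hd : 3 ≤ d) (hT : T.IsTree)
    (hH : H = T ⊔ SimpleGraph.edge u v) (huv : u ≠ v) (hadj : ¬ T.Adj u v) (y : W) :
    IsGreenSupersolution H d y (unicyclicGreen T d u v y) where
  nonneg := unicyclicGreen_nonneg hd u v y
  le z hz := by
    rcases eq_or_ne z u with rfl | hzu
    · rw [sum_neighborFinset_unicyclicGreen_of_eq_sup_edge hd hT hH huv hadj y hz, add_sub_cancel]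
    rcases eq_or_ne z v with rfl | hzv
    · rw [SimpleGraph.edge_comm] at hH
      simp only [unicyclicGreen_swap T d u z]
      rw [sum_neighborFinset_unicyclicGreen_of_eq_sup_edge hd hT hH huv.symm (mt .symm hadj) y hz,
        add_sub_cancel]
    have hnbr := neighborFinset_eq_of_eq_sup_edge hH hzu hzv
    rw [← SimpleGraph.card_neighborFinset_eq_degree, hnbr, T.card_neighborFinset_eq_degree] at hz
    simp [hnbr, sum_neighborFinset_unicyclicGreen hd hT, hz, hzu, hzv]

lemma exists_isGreenSupersolution (hd : 3 ≤ d) (hH : H.Connected)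
    (hcard : H.edgeFinset.card ≤ Fintype.card W) (y : W) :
    ∃ h, IsGreenSupersolution H d y h ∧ ∀ x, h x ≤ 5 / 2 * treeGreen H d y x := by
  obtain ⟨T, hT, rfl | ⟨u, v, huv, hadj, rfl⟩⟩ := exists_isTree_eq_or_eq_sup_edge hH hcard
  · refine ⟨treeGreen H d y, isGreenSupersolution_treeGreen hd hT y, fun x => ?_⟩
    linarith [treeGreen_nonneg (T := H) hd y x]
  · exact ⟨unicyclicGreen T d u v y, isGreenSupersolution_unicyclicGreen hd hT rfl huv hadj y,
      unicyclicGreen_le hd hT.connected rfl huv hadj y⟩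

end Supersolution

section Walk

variable {V : Type*} [Fintype V] {G : SimpleGraph V} {d R : ℕ} {x y z : V}

lemma sum_range_pow_apply_le {P : Matrix V V ℝ} (hP : ∀ z w, 0 ≤ P z w)
    (hadj : ∀ z w, P z w ≠ 0 → G.Adj z w) {h : V → ℝ} (hnonneg : 0 ≤ h)
    (hsuper : ∀ z, G.dist x z < R → (if z = y then 1 else 0) + ∑ w, P z w * h w ≤ h z) :
    ∑ k ∈ Finset.range R, (P ^ k) x y ≤ h x := by
  suffices ∀ k z, G.dist x z + k ≤ R → ∑ j ∈ Finset.range k, (P ^ j) z y ≤ h z from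
    this R x (by simp)
  intro k
  induction k with
  | zero => intro z _; simpa using hnonneg z
  | succ k ih =>
    intro z hz
    calc ∑ j ∈ Finset.range (k + 1), (P ^ j) z y
        = (if z = y then 1 else 0) + ∑ w, P z w * ∑ j ∈ Finset.range k, (P ^ j) w y := by
          rw [Finset.sum_range_succ', pow_zero, Matrix.one_apply, add_comm]
          simp only [pow_succ', Matrix.mul_apply, Finset.mul_sum]
          rw [Finset.sum_comm]
      _ ≤ (if z = y then 1 else 0) + ∑ w, P z w * h w := by
          refine add_le_add_right (Finset.sum_le_sum fun w _ => ?_) _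
          by_cases hw : P z w = 0
          · simp [hw]
          have := dist_le_dist_add_one_of_adj x (hadj z w hw)
          exact mul_le_mul_of_nonneg_left (ih w (by omega)) (hP z w)
      _ ≤ h z := hsuper z (by omega)

lemma transP_nonneg (G : SimpleGraph V) (d : ℕ) (z w : V) : 0 ≤ transP G d z w := by
  simp only [transP, Matrix.of_apply]
  positivity

lemma adj_of_transP_ne_zero {w : V} (h : transP G d z w ≠ 0) : G.Adj z w :=
  by_contra fun hzw => h (if_neg hzw)

lemma sum_transP_mul (G : SimpleGraph V) (d : ℕ) (z : V) (f : V → ℝ) :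
    ∑ w, transP G d z w * f w = (d : ℝ)⁻¹ * ∑ w ∈ G.neighborFinset z, f w := by
  simp [transP, SimpleGraph.neighborFinset_eq_filter, Finset.sum_filter, Finset.mul_sum]

lemma IsReg.degree_eq (hG : IsReg G d) (z : V) : G.degree z = d := by
  rw [← hG z, Nat.card_eq_fintype_card, G.card_neighborSet_eq_degree]

lemma transP_mem_rowStochastic (hd : d ≠ 0) (hG : IsReg G d) :
    transP G d ∈ Matrix.rowStochastic ℝ V := by
  refine Matrix.mem_rowStochastic_iff_sum.2 ⟨transP_nonneg G d, fun z => ?_⟩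
  have h := sum_transP_mul G d z fun _ => 1
  simpa [hG.degree_eq z, hd] using h

lemma IsGreenSupersolution.add_sum_transP_mul_extend_le {U : Set V} {y : U} {h : U → ℝ}
    (hh : IsGreenSupersolution (G.induce U) d y h) (hd : d ≠ 0) (hG : IsReg G d) {z : V}
    (hz : z ∈ U) (hnbr : G.neighborSet z ⊆ U) :
    (if z = y then 1 else 0) + ∑ w, transP G d z w * Function.extend Subtype.val h 0 w ≤
      Function.extend Subtype.val h 0 z := by
  have hext (a : U) : Function.extend Subtype.val h 0 a.1 = h a :=
    Subtype.val_injective.extend_apply h 0 a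
  have hmap := SimpleGraph.map_neighborFinset_induce_of_neighborSet_subset (v := ⟨z, hz⟩) hnbr
  have hdeg := (SimpleGraph.degree_induce_of_neighborSet_subset (v := ⟨z, hz⟩) hnbr).trans
    (hG.degree_eq z)
  have hle := hh.le ⟨z, hz⟩ (by convert hdeg)
  have hd' : (0 : ℝ) < d := by positivity
  rw [sum_transP_mul, ← hmap, Finset.sum_map, hext ⟨z, hz⟩]
  simp only [Function.Embedding.subtype_apply, hext]
  refine le_of_mul_le_mul_left ?_ hd'
  rw [mul_add, mul_inv_cancel_left₀ hd'.ne']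
  simp only [Subtype.ext_iff] at hle
  refine Eq.trans_le ?_ hle
  congr!

lemma sum_range_transP_pow_le (hd : 3 ≤ d) (hG : G.Connected) (hreg : IsReg G d)
    (hcyc : adjPairs G (gball G x R) ≤ 2 * (gball G x R).ncard) (hxy : G.dist x y ≤ R) :
    ∑ k ∈ Finset.range R, (transP G d ^ k) x y ≤ 5 / 2 * treeGreen G d x y := by
  have hx : x ∈ gball G x R := by simp [gball]
  have hconn := connected_induce_gball hG x R
  have hcard : (G.induce (gball G x R)).edgeFinset.card ≤ Fintype.card (gball G x R) := by
    rw [adjPairs_eq_two_mul_card_edgeFinset_induce, ← Nat.card_coe_set_eq,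
      Nat.card_eq_fintype_card] at hcyc
    omega
  obtain ⟨h, hh, hbound⟩ := exists_isGreenSupersolution hd hconn hcard ⟨y, hxy⟩
  calc ∑ k ∈ Finset.range R, (transP G d ^ k) x y ≤ Function.extend Subtype.val h 0 x := by
        refine sum_range_pow_apply_le (transP_nonneg G d) (fun z w => adj_of_transP_ne_zero)
          (Function.extend_nonneg hh.nonneg le_rfl) fun z hz => ?_
        exact hh.add_sum_transP_mul_extend_le (by omega) hreg hz.le fun w hw =>
          (dist_le_dist_add_one_of_adj x hw).trans hz
    _ = h ⟨x, hx⟩ := Subtype.val_injective.extend_apply h 0 ⟨x, hx⟩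
    _ ≤ 5 / 2 * treeGreen (G.induce (gball G x R)) d ⟨y, hxy⟩ ⟨x, hx⟩ := hbound _
    _ ≤ 5 / 2 * treeGreen G d x y := by
        have hd' : (3 : ℝ) ≤ d := by exact_mod_cast hd
        have hdist := dist_le_dist_induce hconn ⟨x, hx⟩ ⟨y, hxy⟩
        rw [treeGreen, treeGreen, SimpleGraph.dist_comm]
        gcongr ?_ * (?_ * ?_)
        · exact div_nonneg (by linarith) (by linarith)
        · exact pow_le_pow_of_le_one (inv_nonneg.2 (by linarith))
            (inv_le_one_of_one_le₀ (by linarith)) hdist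

end Walk

section Poisson

/-- The mass at `k` of the Poisson distribution of parameter `t`. The parameter is a real number
rather than an element of `ℝ≥0` so that the mass can be integrated in `t`. -/
noncomputable def poissonWeight (t : ℝ) (k : ℕ) : ℝ :=
  Real.exp (-t) * t ^ k / Nat.factorial k

lemma poissonWeight_nonneg {t : ℝ} (ht : 0 ≤ t) (k : ℕ) : 0 ≤ poissonWeight t k := by
  unfold poissonWeight
  positivity

lemma hasSum_poissonWeight_mul_pow (t r : ℝ) :
    HasSum (fun k => poissonWeight t k * r ^ k) (Real.exp ((r - 1) * t)) := by
  have h := (NormedSpace.expSeries_div_hasSum_exp (t * r)).mul_left (Real.exp (-t))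
  rw [← Real.exp_eq_exp_ℝ, ← Real.exp_add] at h
  have hfun : (fun k => poissonWeight t k * r ^ k) =
      fun k : ℕ => Real.exp (-t) * ((t * r) ^ k / k.factorial) := by
    funext k
    rw [poissonWeight, mul_pow]
    ring
  rw [hfun, show (r - 1) * t = -t + t * r by ring]
  exact h

lemma tsum_poissonWeight_mul_le {a : ℕ → ℝ} (ha₀ : ∀ k, 0 ≤ a k) (ha₁ : ∀ k, a k ≤ 1) {t : ℝ}
    (ht : 0 ≤ t) (R : ℕ) :
    ∑' k, poissonWeight t k * a k ≤
      ∑ k ∈ Finset.range R, poissonWeight t k * a k + Real.exp (-R + (Real.exp 1 - 1) * t) := by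
  have hchernoff : HasSum (fun k => Real.exp (-R) * (poissonWeight t k * Real.exp 1 ^ k))
      (Real.exp (-R + (Real.exp 1 - 1) * t)) := by
    rw [Real.exp_add]
    exact (hasSum_poissonWeight_mul_pow t (Real.exp 1)).mul_left _
  have hsum := (hasSum_sum_of_ne_finset_zero (f := (Finset.range R : Set ℕ).indicator
    fun k => poissonWeight t k * a k) fun k hk => indicator_of_notMem hk _).add hchernoff
  have hle (k : ℕ) : poissonWeight t k * a k ≤
      (Finset.range R : Set ℕ).indicator (fun k => poissonWeight t k * a k) k +
        Real.exp (-R) * (poissonWeight t k * Real.exp 1 ^ k) := by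
    have hw := poissonWeight_nonneg ht k
    by_cases hk : k ∈ Finset.range R
    · rw [indicator_of_mem (by exact hk)]
      exact le_add_of_nonneg_right (by positivity)
    · have hRk : (R : ℝ) ≤ k := by simpa using hk
      rw [indicator_of_notMem (by exact hk), zero_add, mul_left_comm, ← Real.exp_nat_mul, mul_one,
        ← Real.exp_add]
      exact mul_le_mul_of_nonneg_left ((ha₁ k).trans (Real.one_le_exp (by linarith))) hw
  have := hasSum_le hle (Summable.of_nonneg_of_le
    (fun k => mul_nonneg (poissonWeight_nonneg ht k) (ha₀ k)) hle hsum.summable).hasSum hsum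
  rwa [Finset.sum_indicator_subset _ Finset.Subset.rfl] at this

lemma integrableOn_poissonWeight (k : ℕ) : IntegrableOn (poissonWeight · k) (Ioi 0) := by
  have h := Real.GammaIntegral_convergent (s := k + 1) (by positivity)
  simp only [add_sub_cancel_right, Real.rpow_natCast] at h
  exact h.div_const _

lemma integral_poissonWeight (k : ℕ) : ∫ t in Ioi 0, poissonWeight t k = 1 := by
  have h := Real.Gamma_eq_integral (s := k + 1) (by positivity)
  simp only [add_sub_cancel_right, Real.rpow_natCast] at h
  simp only [poissonWeight]
  rw [integral_div, ← h, Real.Gamma_nat_eq_factorial, div_self (by positivity)]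

lemma integrableOn_sum_poissonWeight_mul (a : ℕ → ℝ) (R : ℕ) :
    IntegrableOn (fun t => ∑ k ∈ Finset.range R, poissonWeight t k * a k) (Ioi 0) :=
  integrable_finsetSum _ fun k _ => (integrableOn_poissonWeight k).mul_const _

lemma setIntegral_Ioc_sum_poissonWeight_mul_le {a : ℕ → ℝ} (ha : ∀ k, 0 ≤ a k) (s : ℝ) (R : ℕ) :
    ∫ t in Ioc 0 s, ∑ k ∈ Finset.range R, poissonWeight t k * a k ≤ ∑ k ∈ Finset.range R, a k := by
  calc ∫ t in Ioc 0 s, ∑ k ∈ Finset.range R, poissonWeight t k * a k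
      ≤ ∫ t in Ioi 0, ∑ k ∈ Finset.range R, poissonWeight t k * a k := by
        refine setIntegral_mono_set (integrableOn_sum_poissonWeight_mul a R) ?_
          Ioc_subset_Ioi_self.eventuallyLE
        filter_upwards [ae_restrict_mem measurableSet_Ioi] with t ht
        exact Finset.sum_nonneg fun k _ => mul_nonneg (poissonWeight_nonneg (le_of_lt ht) k) (ha k)
    _ = ∑ k ∈ Finset.range R, a k := by
        rw [integral_finsetSum _ fun k _ => (integrableOn_poissonWeight k).mul_const _]
        simp only [integral_mul_const, integral_poissonWeight, one_mul]

end Poisson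

section Spectral

variable {V : Type*} [Fintype V]

lemma pow_apply_eq_sum_eigenvalues {P : Matrix V V ℝ} (hP : P.IsHermitian) (k : ℕ) (x y : V) :
    (P ^ k) x y = ∑ i, hP.eigenvalues i ^ k *
      (hP.eigenvectorBasis i x * hP.eigenvectorBasis i y) := by
  conv_lhs => rw [hP.spectral_theorem, ← map_pow, Matrix.diagonal_pow,
    Unitary.conjStarAlgAut_apply]
  simp only [RCLike.ofReal_real_eq_id, CompTriple.comp_eq, Matrix.mul_apply,
    Matrix.IsHermitian.eigenvectorUnitary_apply, Matrix.diagonal_apply, Pi.pow_apply, mul_ite,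
    mul_zero, Finset.sum_ite_eq', Finset.mem_univ, ↓reduceIte, Matrix.star_apply, star_trivial]
  exact Finset.sum_congr rfl fun i _ => by ring

lemma sum_eigenvectorBasis_mul {P : Matrix V V ℝ} (hP : P.IsHermitian) (x y : V) :
    ∑ i, hP.eigenvectorBasis i x * hP.eigenvectorBasis i y = if x = y then 1 else 0 := by
  simpa [Matrix.one_apply] using (pow_apply_eq_sum_eigenvalues hP 0 x y).symm

lemma sum_eq_zero_of_mulVec_eq_smul {P : Matrix V V ℝ} (hP : P ∈ Matrix.colStochastic ℝ V)
    {f : V → ℝ} {μ : ℝ} (hf : P.mulVec f = μ • f) (hμ : μ ≠ 1) : ∑ z, f z = 0 := by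
  have h := Matrix.sum_mulVec_of_mem_colStochastic hP (x := f)
  simp only [hf, Pi.smul_apply, smul_eq_mul, ← Finset.mul_sum] at h
  by_contra h0
  exact hμ ((mul_eq_right₀ h0).1 h)

variable {G : SimpleGraph V} {d : ℕ}

lemma isHermitian_transP (G : SimpleGraph V) (d : ℕ) : (transP G d).IsHermitian := by
  ext a b
  simp [transP, G.adj_comm]

lemma transP_mem_colStochastic (hd : d ≠ 0) (hG : IsReg G d) :
    transP G d ∈ Matrix.colStochastic ℝ V := by
  rw [← Matrix.transpose_mem_rowStochastic_iff_mem_colStochastic,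
    ← Matrix.conjTranspose_eq_transpose_of_trivial, isHermitian_transP]
  exact transP_mem_rowStochastic hd hG

lemma eq_of_transP_mulVec_eq (hd : d ≠ 0) (hG : G.Connected) (hreg : IsReg G d) {f : V → ℝ}
    (hf : (transP G d).mulVec f = f) (x y : V) : f x = f y := by
  refine (SimpleGraph.lapMatrix_mulVec_eq_zero_iff_forall_reachable G).1 ?_ x y (hG x y)
  ext z
  have hz : (d : ℝ)⁻¹ * ∑ w ∈ G.neighborFinset z, f w = f z :=
    (sum_transP_mul G d z f).symm.trans (congrFun hf z)
  rw [G.lapMatrix_mulVec_apply, hreg.degree_eq, ← hz, mul_inv_cancel_left₀ (by positivity),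
    sub_self, Pi.zero_apply]

lemma sum_eigenvectorBasis_transP_mul_of_eigenvalue_eq_one (hd : d ≠ 0) (hG : G.Connected)
    (hreg : IsReg G d) (x y : V) :
    ∑ i with (isHermitian_transP G d).eigenvalues i = 1,
      (isHermitian_transP G d).eigenvectorBasis i x *
        (isHermitian_transP G d).eigenvectorBasis i y = 1 / Fintype.card V := by
  set hP := isHermitian_transP G d
  have hconst (i) (hi : hP.eigenvalues i = 1) (z : V) :
      hP.eigenvectorBasis i y = hP.eigenvectorBasis i z :=
    eq_of_transP_mulVec_eq hd hG hreg
      (by rw [hP.mulVec_eigenvectorBasis, hi, one_smul]) y z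
  have hsum (i) (hi : hP.eigenvalues i ≠ 1) : ∑ z, hP.eigenvectorBasis i z = 0 :=
    sum_eq_zero_of_mulVec_eq_smul (transP_mem_colStochastic hd hreg)
      (hP.mulVec_eigenvectorBasis i) hi
  have hcard : (Fintype.card V : ℝ) ≠ 0 := by
    have : Nonempty V := ⟨x⟩
    positivity
  rw [eq_div_iff hcard, mul_comm]
  calc (Fintype.card V : ℝ) * ∑ i with hP.eigenvalues i = 1,
        hP.eigenvectorBasis i x * hP.eigenvectorBasis i y
      = ∑ z : V, ∑ i with hP.eigenvalues i = 1,
          hP.eigenvectorBasis i x * hP.eigenvectorBasis i z := by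
        rw [← nsmul_eq_mul, ← Finset.card_univ, ← Finset.sum_const]
        refine Finset.sum_congr rfl fun z _ => Finset.sum_congr rfl fun i hi => ?_
        rw [hconst i (Finset.mem_filter.1 hi).2 z]
    _ = ∑ i with hP.eigenvalues i = 1, hP.eigenvectorBasis i x * ∑ z, hP.eigenvectorBasis i z := by
        rw [Finset.sum_comm]
        simp only [Finset.mul_sum]
    _ = ∑ i, hP.eigenvectorBasis i x * ∑ z, hP.eigenvectorBasis i z :=
        Finset.sum_filter_of_ne fun i _ hi => not_not.1 fun hne => hi (by rw [hsum i hne, mul_zero])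
    _ = ∑ z : V, ∑ i, hP.eigenvectorBasis i x * hP.eigenvectorBasis i z := by
        rw [Finset.sum_comm]
        simp only [Finset.mul_sum]
    _ = 1 := by simp [sum_eigenvectorBasis_mul]

lemma heatK_eq_sum_eigenvalues (G : SimpleGraph V) (d : ℕ) (t : ℝ) (x y : V) :
    heatK G d t x y = ∑ i, Real.exp (((isHermitian_transP G d).eigenvalues i - 1) * t) *
      ((isHermitian_transP G d).eigenvectorBasis i x *
        (isHermitian_transP G d).eigenvectorBasis i y) := by
  have h := hasSum_sum fun i (_ : i ∈ Finset.univ) =>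
    (hasSum_poissonWeight_mul_pow t ((isHermitian_transP G d).eigenvalues i)).mul_right
      ((isHermitian_transP G d).eigenvectorBasis i x *
        (isHermitian_transP G d).eigenvectorBasis i y)
  rw [← h.tsum_eq]
  refine tsum_congr fun k => ?_
  rw [pow_apply_eq_sum_eigenvalues (isHermitian_transP G d), Finset.mul_sum]
  simp only [mul_assoc, poissonWeight]

lemma eigenvalues_transP_sub_one_le {β : ℝ} (hgap : SpectralGapLB G d β) {i : V}
    (hi : (isHermitian_transP G d).eigenvalues i ≠ 1) :
    (isHermitian_transP G d).eigenvalues i - 1 ≤ -β := by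
  set hP := isHermitian_transP G d
  have hgap_i := hgap (hP.eigenvectorBasis i) (1 - hP.eigenvalues i)
    (by rw [Matrix.sub_mulVec, Matrix.one_mulVec, hP.mulVec_eigenvectorBasis, sub_smul, one_smul])
    (by simpa using hP.eigenvectorBasis.orthonormal.ne_zero i)
  linarith [hgap_i.resolve_left (sub_ne_zero.2 hi.symm)]

lemma abs_heatK_sub_le {β : ℝ} (hd : d ≠ 0) (hG : G.Connected) (hreg : IsReg G d)
    (hgap : SpectralGapLB G d β) {t : ℝ} (ht : 0 ≤ t) (x y : V) :
    |heatK G d t x y - 1 / Fintype.card V| ≤ Real.exp (-β * t) := by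
  set hP := isHermitian_transP G d with hP_def
  have hsq (z : V) : ∑ i, hP.eigenvectorBasis i z ^ 2 = 1 := by
    simpa [sq] using sum_eigenvectorBasis_mul hP z z
  rw [heatK_eq_sum_eigenvalues, ← hP_def,
    ← Finset.sum_filter_add_sum_filter_not _ (hP.eigenvalues · = 1),
    Finset.sum_congr rfl fun i hi => by
      rw [(Finset.mem_filter.1 hi).2, sub_self, zero_mul, Real.exp_zero, one_mul],
    sum_eigenvectorBasis_transP_mul_of_eigenvalue_eq_one hd hG hreg, add_sub_cancel_left]
  calc |∑ i with hP.eigenvalues i ≠ 1, Real.exp ((hP.eigenvalues i - 1) * t) *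
        (hP.eigenvectorBasis i x * hP.eigenvectorBasis i y)|
      ≤ ∑ i with hP.eigenvalues i ≠ 1, Real.exp (-β * t) *
          ((hP.eigenvectorBasis i x ^ 2 + hP.eigenvectorBasis i y ^ 2) / 2) := by
        refine (Finset.abs_sum_le_sum_abs _ _).trans (Finset.sum_le_sum fun i hi => ?_)
        rw [abs_mul, Real.abs_exp]
        gcongr
        · exact eigenvalues_transP_sub_one_le hgap (Finset.mem_filter.1 hi).2
        · rw [abs_le]
          constructor <;> nlinarith [sq_nonneg (hP.eigenvectorBasis i x - hP.eigenvectorBasis i y),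
            sq_nonneg (hP.eigenvectorBasis i x + hP.eigenvectorBasis i y)]
    _ ≤ ∑ i, Real.exp (-β * t) *
          ((hP.eigenvectorBasis i x ^ 2 + hP.eigenvectorBasis i y ^ 2) / 2) :=
        Finset.sum_le_sum_of_subset_of_nonneg (Finset.filter_subset _ _)
          fun i _ _ => by positivity
    _ = Real.exp (-β * t) := by
        rw [← Finset.mul_sum, ← Finset.sum_div, Finset.sum_add_distrib, hsq, hsq]
        norm_num

end Spectral

section Green

variable {V : Type*} [Fintype V] {G : SimpleGraph V} {d : ℕ} {β : ℝ}

lemma continuous_heatK (G : SimpleGraph V) (d : ℕ) (x y : V) :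
    Continuous (heatK G d · x y) := by
  simp only [heatK_eq_sum_eigenvalues]
  fun_prop

lemma integrableOn_heatK_sub (hd : d ≠ 0) (hG : G.Connected) (hreg : IsReg G d) (hβ : 0 < β)
    (hgap : SpectralGapLB G d β) (x y : V) :
    IntegrableOn (fun t => heatK G d t x y - 1 / Fintype.card V) (Ioi 0) := by
  refine (exp_neg_integrableOn_Ioi 0 hβ).mono'
    ((continuous_heatK G d x y).sub continuous_const).aestronglyMeasurable ?_
  filter_upwards [ae_restrict_mem measurableSet_Ioi] with t ht
  exact abs_heatK_sub_le hd hG hreg hgap (le_of_lt ht) x y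

lemma setIntegral_Ioi_heatK_sub_le (hd : d ≠ 0) (hG : G.Connected) (hreg : IsReg G d)
    (hβ : 0 < β) (hgap : SpectralGapLB G d β) {s : ℝ} (hs : 0 ≤ s) (x y : V) :
    ∫ t in Ioi s, (heatK G d t x y - 1 / Fintype.card V) ≤ Real.exp (-β * s) / β := by
  calc ∫ t in Ioi s, (heatK G d t x y - 1 / Fintype.card V)
      ≤ ∫ t in Ioi s, Real.exp (-β * t) :=
        setIntegral_mono_on
          ((integrableOn_heatK_sub hd hG hreg hβ hgap x y).mono_set (Ioi_subset_Ioi hs))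
          (exp_neg_integrableOn_Ioi s hβ) measurableSet_Ioi fun t ht =>
            (abs_le.1 (abs_heatK_sub_le hd hG hreg hgap (hs.trans (le_of_lt ht)) x y)).2
    _ = Real.exp (-β * s) / β := by
        rw [integral_exp_mul_Ioi (neg_lt_zero.2 hβ), div_neg, neg_div, neg_neg]

lemma setIntegral_Ioc_heatK_le (hd : d ≠ 0) (hreg : IsReg G d) {s : ℝ} (hs : 0 ≤ s) (R : ℕ)
    (x y : V) :
    ∫ t in Ioc 0 s, heatK G d t x y ≤
      ∑ k ∈ Finset.range R, (transP G d ^ k) x y +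
        s * Real.exp (-R + (Real.exp 1 - 1) * s) := by
  have hmem (k : ℕ) : transP G d ^ k ∈ Matrix.rowStochastic ℝ V :=
    pow_mem (transP_mem_rowStochastic hd hreg) k
  have hnonneg (k : ℕ) : 0 ≤ (transP G d ^ k) x y := Matrix.nonneg_of_mem_rowStochastic (hmem k)
  have he : 0 ≤ Real.exp 1 - 1 := sub_nonneg.2 (Real.one_le_exp zero_le_one)
  have h_int : IntegrableOn
      (fun t => ∑ k ∈ Finset.range R, poissonWeight t k * (transP G d ^ k) x y) (Ioc 0 s) :=
    (integrableOn_sum_poissonWeight_mul _ R).mono_set Ioc_subset_Ioi_self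
  calc ∫ t in Ioc 0 s, heatK G d t x y
      ≤ ∫ t in Ioc 0 s, (∑ k ∈ Finset.range R, poissonWeight t k * (transP G d ^ k) x y +
          Real.exp (-R + (Real.exp 1 - 1) * s)) := by
        refine setIntegral_mono_on (continuous_heatK G d x y).integrableOn_Ioc
          (h_int.add (by simp)) measurableSet_Ioc fun t ht => ?_
        refine (tsum_poissonWeight_mul_le hnonneg
          (fun k => Matrix.le_one_of_mem_rowStochastic (hmem k)) ht.1.le R).trans ?_
        gcongr
        exact ht.2
    _ = (∫ t in Ioc 0 s, ∑ k ∈ Finset.range R, poissonWeight t k * (transP G d ^ k) x y) +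
          s * Real.exp (-R + (Real.exp 1 - 1) * s) := by
        rw [integral_add h_int (by simp)]
        simp [hs]
    _ ≤ ∑ k ∈ Finset.range R, (transP G d ^ k) x y +
          s * Real.exp (-R + (Real.exp 1 - 1) * s) := by
        gcongr
        exact setIntegral_Ioc_sum_poissonWeight_mul_le hnonneg s R

lemma zGreen_le (hd : d ≠ 0) (hG : G.Connected) (hreg : IsReg G d) (hβ : 0 < β)
    (hgap : SpectralGapLB G d β) {s : ℝ} (hs : 0 ≤ s) (R : ℕ) (x y : V) :
    zGreen G d (Fintype.card V) x y ≤ ∑ k ∈ Finset.range R, (transP G d ^ k) x y +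
      (s * Real.exp (-R + (Real.exp 1 - 1) * s) + Real.exp (-β * s) / β) := by
  have h_int := integrableOn_heatK_sub hd hG hreg hβ hgap x y
  have hshort : ∫ t in Ioc 0 s, (heatK G d t x y - 1 / Fintype.card V) ≤
      ∫ t in Ioc 0 s, heatK G d t x y :=
    setIntegral_mono (h_int.mono_set Ioc_subset_Ioi_self)
      (continuous_heatK G d x y).integrableOn_Ioc fun t => sub_le_self _ (by positivity)
  rw [zGreen, ← Ioc_union_Ioi_eq_Ioi hs, setIntegral_union (Ioc_disjoint_Ioi le_rfl)
    measurableSet_Ioi (h_int.mono_set Ioc_subset_Ioi_self) (h_int.mono_set (Ioi_subset_Ioi hs)),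
    ← add_assoc]
  exact add_le_add (hshort.trans (setIntegral_Ioc_heatK_le hd hreg hs R x y))
    (setIntegral_Ioi_heatK_sub_le hd hG hreg hβ hgap hs x y)

end Green

section Asymptotics

lemma eventually_error_le {β : ℝ} (hβ₀ : 0 < β) (hβ₂ : β ≤ 2) :
    ∀ᶠ s : ℝ in atTop, ∀ R : ℝ, 3 / 2 * (Real.exp 1 * s) - 1 ≤ R →
      s * Real.exp (-R + (Real.exp 1 - 1) * s) + Real.exp (-β * s) / β ≤
        1 / 2 * Real.exp (-(β * s / 2)) := by
  have hpoisson : ∀ᶠ s : ℝ in atTop, s ^ 1 * Real.exp (-s) ≤ 1 / (4 * Real.exp 1) :=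
    (Real.tendsto_pow_mul_exp_neg_atTop_nhds_zero 1).eventually_le_const (by positivity)
  have hgap : ∀ᶠ s : ℝ in atTop, Real.exp (-(β / 2 * s)) ≤ β / 4 :=
    (Real.tendsto_exp_neg_atTop_nhds_zero.comp
      (tendsto_id.const_mul_atTop (half_pos hβ₀))).eventually_le_const (by positivity)
  filter_upwards [hpoisson, hgap, eventually_ge_atTop 0] with s hs_poisson hs_gap hs R hR
  have he : β ≤ Real.exp 1 := hβ₂.trans Real.exp_one_gt_two.le
  have hexponent : -R + (Real.exp 1 - 1) * s ≤ -s + (1 + -(β * s / 2)) := by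
    linarith [mul_le_mul_of_nonneg_right he hs]
  have h₁ : s * Real.exp (-R + (Real.exp 1 - 1) * s) ≤ 1 / 4 * Real.exp (-(β * s / 2)) :=
    calc s * Real.exp (-R + (Real.exp 1 - 1) * s)
        ≤ s * Real.exp (-s + (1 + -(β * s / 2))) := by gcongr
      _ = s ^ 1 * Real.exp (-s) * (Real.exp 1 * Real.exp (-(β * s / 2))) := by
          rw [Real.exp_add, Real.exp_add]
          ring
      _ ≤ 1 / (4 * Real.exp 1) * (Real.exp 1 * Real.exp (-(β * s / 2))) := by gcongr
      _ = 1 / 4 * Real.exp (-(β * s / 2)) := by field_simp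
  have h₂ : Real.exp (-β * s) / β ≤ 1 / 4 * Real.exp (-(β * s / 2)) :=
    calc Real.exp (-β * s) / β
        = Real.exp (-(β / 2 * s)) / β * Real.exp (-(β * s / 2)) := by
          rw [div_mul_eq_mul_div, ← Real.exp_add]
          ring_nf
      _ ≤ β / 4 / β * Real.exp (-(β * s / 2)) := by gcongr
      _ = 1 / 4 * Real.exp (-(β * s / 2)) := by field_simp
  linarith

lemma exp_one_mul_div_le_mul_logb {α q u : ℝ} (hα : 0 ≤ α) (hq : 1 < q) (hu : 1 ≤ u) :
    Real.exp 1 * (α * Real.log u / q) ≤ α * Real.logb q u := by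
  have hlog : Real.exp 1 * Real.log q ≤ q := by
    simpa only [Real.exp_log (zero_lt_one.trans hq)] using
      Real.exp_one_mul_le_exp (x := Real.log q)
  have hu' := Real.log_nonneg hu
  rw [Real.logb, ← mul_div_assoc, ← mul_div_assoc,
    div_le_div_iff₀ (zero_lt_one.trans hq) (Real.log_pos hq)]
  calc Real.exp 1 * (α * Real.log u) * Real.log q
      = α * Real.log u * (Real.exp 1 * Real.log q) := by ring
    _ ≤ α * Real.log u * q := by gcongr

lemma exp_neg_mul_log_le_inv_pow {c q u : ℝ} (hq : 1 < q) {D : ℕ}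
    (hD : (D : ℝ) ≤ c * Real.logb q u) : Real.exp (-(c * Real.log u)) ≤ q⁻¹ ^ D := by
  rw [Real.logb, ← mul_div_assoc, le_div_iff₀ (Real.log_pos hq)] at hD
  calc Real.exp (-(c * Real.log u)) ≤ Real.exp (-(D * Real.log q)) := by gcongr
    _ = q⁻¹ ^ D := by
      rw [Real.exp_neg, Real.exp_nat_mul, Real.exp_log (zero_lt_one.trans hq), inv_pow]

lemma c0_div_three_le {d : ℕ} {α β : ℝ} (hd : 3 ≤ d) (hα : 0 ≤ α) (hβ : β ≤ 2) :
    c0 d α β / 3 ≤ α := by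
  have hd' : (3 : ℝ) ≤ d := by exact_mod_cast hd
  rw [c0, div_div, div_le_iff₀ (by linarith)]
  exact mul_le_mul_of_nonneg_left (by linarith) hα

lemma eventually_exists_error_le {d : ℕ} {α β : ℝ} (hd : 3 ≤ d) (hα : 0 < α) (hβ₀ : 0 < β)
    (hβ₂ : β ≤ 2) :
    ∀ᶠ N : ℕ in atTop, ∃ s : ℝ, 0 ≤ s ∧
      ∀ D : ℕ, (D : ℝ) ≤ c0 d α β / 3 * Real.logb ((d : ℝ) - 1) N →
        s * Real.exp (-⌊α * Real.logb ((d : ℝ) - 1) N⌋₊ + (Real.exp 1 - 1) * s) +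
          Real.exp (-β * s) / β ≤ 1 / 2 * ((d : ℝ) - 1)⁻¹ ^ D := by
  have hd' : (3 : ℝ) ≤ d := by exact_mod_cast hd
  have hq : 1 < (d : ℝ) - 1 := by linarith
  have hs : Tendsto (fun N : ℕ => 2 / 3 * (α / ((d : ℝ) - 1)) * Real.log N) atTop atTop :=
    (Real.tendsto_log_atTop.comp tendsto_natCast_atTop_atTop).const_mul_atTop (by positivity)
  filter_upwards [hs.eventually (eventually_error_le hβ₀ hβ₂), hs.eventually_ge_atTop 0,
    eventually_ge_atTop 1] with N herror hs₀ hN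
  refine ⟨_, hs₀, fun D hD => (herror _ ?_).trans ?_⟩
  · have hfloor := Nat.lt_floor_add_one (α * Real.logb ((d : ℝ) - 1) N)
    have hlogb := exp_one_mul_div_le_mul_logb hα.le hq (Nat.one_le_cast.2 hN)
    linear_combination hlogb + hfloor.le
  · have hpow := exp_neg_mul_log_le_inv_pow hq hD
    rw [show c0 d α β / 3 * Real.log N = β * (2 / 3 * (α / ((d : ℝ) - 1)) * Real.log N) / 2 by
      rw [c0]; ring] at hpow
    gcongr

end Asymptotics

end GFF

universe u

theorem green_function_upper_bound_close_general {d : ℕ} (hd : 3 ≤ d) {α β : ℝ} (hα : 0 < α)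
    (hβ₀ : 0 < β) (hβ₂ : β ≤ 2) :
    ∀ᶠ N : ℕ in atTop, ∀ (V : Type u) [Fintype V] (G : SimpleGraph V), Nat.card V = N →
      G.Connected → GFF.IsReg G d →
      (∀ x, GFF.adjPairs G (GFF.gball G x ⌊α * Real.logb ((d : ℝ) - 1) N⌋₊) ≤
        2 * (GFF.gball G x ⌊α * Real.logb ((d : ℝ) - 1) N⌋₊).ncard) →
      GFF.SpectralGapLB G d β →
      ∀ x y, (G.dist x y : ℝ) ≤ GFF.c0 d α β / 3 * Real.logb ((d : ℝ) - 1) N →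
        GFF.zGreen G d N x y ≤
          3 * (((d : ℝ) - 1) / ((d : ℝ) - 2)) * ((d : ℝ) - 1)⁻¹ ^ G.dist x y := by
  filter_upwards [GFF.eventually_exists_error_le hd hα hβ₀ hβ₂, eventually_ge_atTop 1]
    with N ⟨s, hs, herror⟩ hN V _ G hcard hG hreg hcyc hgap x y hxy
  have hd' : (3 : ℝ) ≤ d := by exact_mod_cast hd
  have hlogb : 0 ≤ Real.logb ((d : ℝ) - 1) N :=
    Real.logb_nonneg (by linarith) (Nat.one_le_cast.2 hN)
  set R := ⌊α * Real.logb ((d : ℝ) - 1) N⌋₊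
  have hxyR : G.dist x y ≤ R := Nat.le_floor <| hxy.trans <|
    mul_le_mul_of_nonneg_right (GFF.c0_div_three_le hd hα.le hβ₂) hlogb
  rw [← hcard, Nat.card_eq_fintype_card]
  calc GFF.zGreen G d (Fintype.card V) x y
      ≤ ∑ k ∈ Finset.range R, (GFF.transP G d ^ k) x y +
          (s * Real.exp (-R + (Real.exp 1 - 1) * s) + Real.exp (-β * s) / β) :=
        GFF.zGreen_le (by omega) hG hreg hβ₀ hgap hs R x y
    _ ≤ 5 / 2 * GFF.treeGreen G d x y + 1 / 2 * GFF.treeGreen G d x y := by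
        gcongr
        · exact GFF.sum_range_transP_pow_le hd hG hreg (hcyc x) hxyR
        · linarith [herror _ hxy, GFF.inv_pow_dist_le_treeGreen (T := G) hd x y]
    _ = 3 * (((d : ℝ) - 1) / ((d : ℝ) - 2)) * ((d : ℝ) - 1)⁻¹ ^ G.dist x y := by
        rw [GFF.treeGreen]
        ring

/-- Green function bound at logarithmic distances, for large `n`. -/
theorem green_function_upper_bound_close
    (d : ℕ) (hd : 3 ≤ d)
    (V : ℕ → Type) [∀ n, Fintype (V n)]
    (G : ∀ n, SimpleGraph (V n)) (N : ℕ → ℕ) (α β : ℝ)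
    (hα : 0 < α ∧ α ≤ 1) (hβ : 0 < β ∧ β ≤ 2)
    (hNmono : StrictMono N) (hNpos : ∀ n, 1 ≤ N n)
    (hcard : ∀ n, Nat.card (V n) = N n)
    (hconn : ∀ n, (G n).Connected)
    (hreg : ∀ n, GFF.IsReg (G n) d)
    (hcyc : ∀ n (x : V n),
      GFF.adjPairs (G n) (GFF.gball (G n) x ⌊α * Real.logb ((d : ℝ) - 1) (N n : ℝ)⌋₊) ≤
        2 * (GFF.gball (G n) x ⌊α * Real.logb ((d : ℝ) - 1) (N n : ℝ)⌋₊).ncard)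
    (hgap : ∀ n, GFF.SpectralGapLB (G n) d β) :
    ∃ n₀ : ℕ, ∀ n ≥ n₀, ∀ x y : V n,
      ((G n).dist x y : ℝ) ≤ GFF.c0 d α β / 3 * Real.logb ((d : ℝ) - 1) (N n : ℝ) →
      GFF.zGreen (G n) d (N n) x y ≤
        3 * (((d : ℝ) - 1) / ((d : ℝ) - 2)) * (((d : ℝ) - 1)⁻¹) ^ ((G n).dist x y) := by
  obtain ⟨n₀, h⟩ := (hNmono.tendsto_atTop.eventually
    (green_function_upper_bound_close_general hd hα.1 hβ.1 hβ.2)).exists_forall_of_atTop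
  exact ⟨n₀, fun n hn =>
    h n hn (V n) (G n) (hcard n) (hconn n) (hreg n) (hcyc n) (hgap n)⟩
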